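/- Let A ∈ ℝ^{m×n} with m ≤ n and A ≠ 0, with largest and smallest singular values σ₁ and σ_m, let k be a positive integer with 3k ≤ n, and let δ ∈ (0,1) be a restricted isometry constant of order 3k for A. Suppose ε > σ₁² and 0 ≤ λ ≤ ε + σ_m². Let x ∈ ℝ^n, e ∈ ℝ^m, y = Ax + e, let x_S be a hard k-thresholding of x, and set e' := A(x − x_S) + e. If x^p ∈ ℝ^n is k-sparse and x^{p+1} is a hard k-thresholding of x^p + λ(AᵀA + εI)^{−1}Aᵀ(y − Ax^p), then ‖x^{p+1} − x_S‖₂ ≤ √3 [ (δ + σ₁² − λσ₁²/(ε + σ₁²)) ‖x^p − x_S‖₂ + (λσ₁/(ε + σ₁²)) ‖e'‖₂ ]. -/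

import Mathlib

/-!
Write `G = Aᵀ A`, `M = G + ε I`, `h = xᵖ - x_S`, and let `u` be the point that is thresholded to give
`xᵖ⁺¹`. Since `y = A x_S + e'`,
`u - x_S = (h - G h) + (G h - λ M⁻¹ G h) + λ M⁻¹ Aᵀ e'`.
Let `T` be the union of the index sets of the two thresholdings. Four estimates give the bound.

* Hard thresholding (`threshold_bound`): `‖xᵖ⁺¹ - x_S‖ ≤ √3 ‖(u - x_S)_T‖`.
* Restricted isometry (`ric_bound`): `‖(h - G h)_T‖ ≤ δ ‖h‖`, as `T ∪ supp h` lies in a set of at most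
  `3k` indices.
* Spectral calculus (`spectral_bound`): `G h - λ M⁻¹ G h = f(G) h` with `f t = t - λ t / (ε + t)`. The
  nonzero eigenvalues of `G` lie in `[σ_m², σ₁²]`, where `f` is nonnegative and increasing because
  `λ ≤ ε + σ_m²`; the eigenvalue `0` is harmless because `f 0 = 0`.
* Regularized inverse (`noise_bound`): `‖M⁻¹ Aᵀ e'‖ ≤ σ₁ / (ε + σ₁²) ‖e'‖`, because `s / (ε + s²)` is
  increasing for `s² ≤ ε`.
-/

open Matrix Filter Topology

/-- Euclidean (ℓ₂) norm of a vector in ℝ^n. -/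
noncomputable def norm2 {n : ℕ} (x : Fin n → ℝ) : ℝ := Real.sqrt (∑ i, x i ^ 2)

/-- Euclidean inner product. -/
def dot {n : ℕ} (u v : Fin n → ℝ) : ℝ := ∑ i, u i * v i

/-- Support of a vector. -/
def supp {n : ℕ} (x : Fin n → ℝ) : Set (Fin n) := {i | x i ≠ 0}

/-- δ ∈ (0,1) is a restricted isometry constant of order q for A. -/
def IsRIC {m n : ℕ} (A : Matrix (Fin m) (Fin n) ℝ) (q : ℕ) (δ : ℝ) : Prop :=
  0 < δ ∧ δ < 1 ∧
    ∀ x : Fin n → ℝ, (supp x).ncard ≤ q →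
      (1 - δ) * norm2 x ^ 2 ≤ norm2 (A.mulVec x) ^ 2 ∧
      norm2 (A.mulVec x) ^ 2 ≤ (1 + δ) * norm2 x ^ 2

/-- σ is the largest singular value (spectral norm) of A: it bounds ‖Av‖₂/‖v‖₂
and this bound is attained. -/
def IsMaxSingularValue {m n : ℕ} (A : Matrix (Fin m) (Fin n) ℝ) (σ : ℝ) : Prop :=
  0 ≤ σ ∧ (∀ v : Fin n → ℝ, norm2 (A.mulVec v) ≤ σ * norm2 v) ∧
    ∃ v : Fin n → ℝ, v ≠ 0 ∧ norm2 (A.mulVec v) = σ * norm2 v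

/-- For m ≤ n, σ is the smallest singular value of A, i.e. σ² is the smallest
eigenvalue of A Aᵀ: σ is the infimum of ‖Aᵀu‖₂/‖u‖₂ and it is attained. -/
def IsMinSingularValue {m n : ℕ} (A : Matrix (Fin m) (Fin n) ℝ) (σ : ℝ) : Prop :=
  0 ≤ σ ∧ (∀ u : Fin m → ℝ, σ * norm2 u ≤ norm2 (Aᵀ.mulVec u)) ∧
    ∃ u : Fin m → ℝ, u ≠ 0 ∧ norm2 (Aᵀ.mulVec u) = σ * norm2 u

/-- w is a hard k-thresholding of z with associated index set S*. -/
def IsHardThresholding {n : ℕ} (k : ℕ) (z w : Fin n → ℝ) (S : Set (Fin n)) : Prop :=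
  S.ncard = k ∧ (∀ i ∈ S, w i = z i) ∧ (∀ i ∉ S, w i = 0) ∧
    ∀ i ∈ S, ∀ j ∉ S, |z j| ≤ |z i|

/-! ### The Euclidean norm and restriction to an index set -/

lemma norm2_nonneg {n : ℕ} (x : Fin n → ℝ) : 0 ≤ norm2 x := Real.sqrt_nonneg _

lemma norm2_sq {n : ℕ} (x : Fin n → ℝ) : norm2 x ^ 2 = x ⬝ᵥ x := by
  unfold norm2
  rw [Real.sq_sqrt (Finset.sum_nonneg fun i _ => sq_nonneg _)]
  simp [dotProduct, sq]

lemma norm2_eq_norm {n : ℕ} (x : Fin n → ℝ) : norm2 x = ‖WithLp.toLp 2 x‖ := by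
  simp [norm2, EuclideanSpace.norm_eq]

lemma norm2_add_le {n : ℕ} (x y : Fin n → ℝ) : norm2 (x + y) ≤ norm2 x + norm2 y := by
  simp only [norm2_eq_norm, WithLp.toLp_add]
  exact norm_add_le _ _

lemma norm2_smul {n : ℕ} (c : ℝ) (hc : 0 ≤ c) (x : Fin n → ℝ) :
    norm2 (c • x) = c * norm2 x := by
  simp only [norm2_eq_norm, WithLp.toLp_smul, norm_smul, Real.norm_eq_abs, abs_of_nonneg hc]

lemma dot_le_norm2 {n : ℕ} (x y : Fin n → ℝ) : x ⬝ᵥ y ≤ norm2 x * norm2 y := by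
  have h := real_inner_le_norm (WithLp.toLp 2 x) (WithLp.toLp 2 y)
  rw [EuclideanSpace.inner_toLp_toLp] at h
  simp only [norm2_eq_norm]
  simpa [dotProduct_comm] using h

lemma norm2_le_of_sq {n : ℕ} (x : Fin n → ℝ) {c : ℝ} (hc : 0 ≤ c) (h : norm2 x ^ 2 ≤ c ^ 2) :
    norm2 x ≤ c := by
  exact (sq_le_sq₀ (norm2_nonneg x) hc).1 h

/-- The restriction of a vector to the index set `T`, extended by zero. -/
def restr {n : ℕ} (T : Finset (Fin n)) (d : Fin n → ℝ) : Fin n → ℝ :=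
  fun i => if i ∈ T then d i else 0

lemma restr_add {n : ℕ} (T : Finset (Fin n)) (x y : Fin n → ℝ) :
    restr T (x + y) = restr T x + restr T y := by
  ext i
  by_cases h : i ∈ T <;> simp [restr, h]

lemma norm2_restr_sq {n : ℕ} (T : Finset (Fin n)) (d : Fin n → ℝ) :
    norm2 (restr T d) ^ 2 = ∑ i ∈ T, d i ^ 2 := by
  unfold norm2
  rw [Real.sq_sqrt (Finset.sum_nonneg fun i _ => sq_nonneg _)]
  simp [restr, ite_pow]

lemma norm2_restr_le {n : ℕ} (T : Finset (Fin n)) (d : Fin n → ℝ) :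
    norm2 (restr T d) ≤ norm2 d := by
  unfold norm2
  apply Real.sqrt_le_sqrt
  apply Finset.sum_le_sum
  intro i _
  by_cases h : i ∈ T <;> simp [restr, h, sq_nonneg]

/-! ### Hard thresholding -/

lemma sum_le_sum_of_card_eq {ι : Type*} (P Q : Finset ι) (hc : P.card = Q.card)
    (f : ι → ℝ) (h : ∀ i ∈ P, ∀ j ∈ Q, f i ≤ f j) : ∑ i ∈ P, f i ≤ ∑ j ∈ Q, f j := by
  rw [← Finset.sum_coe_sort P, ← Finset.sum_coe_sort Q,
    ← Equiv.sum_comp (Finset.equivOfCardEq hc) (fun j : Q => f j)]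
  exact Finset.sum_le_sum fun i _ => h i i.2 _ (Finset.equivOfCardEq hc i).2

/-- Hard thresholding loses at most a factor `√3`. On `S \ S'` the error is `-x = d - u` with
`d = u - x`, so `x² ≤ 2 u² + 2 d²`; and the `u`-mass of `S \ S'` is at most that of `S' \ S`, where
`u = d`. -/
lemma threshold_bound {n : ℕ} (S S' : Finset (Fin n)) (hc : S.card = S'.card)
    (x u z : Fin n → ℝ) (hx : ∀ i ∉ S, x i = 0) (hz : ∀ i ∈ S', z i = u i)
    (hz0 : ∀ i ∉ S', z i = 0) (hle : ∀ i ∈ S', ∀ j ∉ S', |u j| ≤ |u i|) :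
    norm2 (z - x) ≤ Real.sqrt 3 * norm2 (restr (S ∪ S') (u - x)) := by
  apply norm2_le_of_sq _ (mul_nonneg (Real.sqrt_nonneg _) (norm2_nonneg _))
  rw [mul_pow, Real.sq_sqrt (by norm_num), norm2_restr_sq]
  have hzx : norm2 (z - x) ^ 2 = ∑ i ∈ S ∪ S', (z i - x i) ^ 2 := by
    have : z - x = restr (S ∪ S') (z - x) := by
      ext i
      by_cases h : i ∈ S ∪ S'
      · simp [restr, h]
      · have h1 : i ∉ S := fun hh => h (Finset.mem_union_left _ hh)
        have h2 : i ∉ S' := fun hh => h (Finset.mem_union_right _ hh)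
        simp [restr, h1, h2, hx i h1, hz0 i h2]
    rw [this, norm2_restr_sq]
    simp
  have hU (g : Fin n → ℝ) : ∑ i ∈ S ∪ S', g i
      = ∑ i ∈ S \ S', g i + ∑ i ∈ S' \ S, g i + ∑ i ∈ S ∩ S', g i := by
    rw [← Finset.sdiff_union_self_eq_union, Finset.sum_union Finset.sdiff_disjoint,
      ← Finset.sum_sdiff (Finset.inter_subset_right : S ∩ S' ⊆ S'),
      Finset.sdiff_inter_self_right]
    ring
  have hcard : (S \ S').card = (S' \ S).card := Finset.card_sdiff_comm hc
  have h1 : ∑ i ∈ S \ S', u i ^ 2 ≤ ∑ i ∈ S' \ S, u i ^ 2 := by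
    apply sum_le_sum_of_card_eq _ _ hcard
    intro i hi j hj
    exact sq_le_sq.2 (hle j (Finset.mem_sdiff.1 hj).1 i (Finset.mem_sdiff.1 hi).2)
  have h2 : ∑ i ∈ S' \ S, u i ^ 2 = ∑ i ∈ S' \ S, (u i - x i) ^ 2 := by
    apply Finset.sum_congr rfl
    intro i hi
    rw [hx i (Finset.mem_sdiff.1 hi).2, sub_zero]
  have h3 : ∑ i ∈ S' \ S, (z i - x i) ^ 2 = ∑ i ∈ S' \ S, (u i - x i) ^ 2 := by
    apply Finset.sum_congr rfl
    intro i hi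
    rw [hz i (Finset.mem_sdiff.1 hi).1]
  have h4 : ∑ i ∈ S ∩ S', (z i - x i) ^ 2 = ∑ i ∈ S ∩ S', (u i - x i) ^ 2 := by
    apply Finset.sum_congr rfl
    intro i hi
    rw [hz i (Finset.mem_inter.1 hi).2]
  have h5 : ∑ i ∈ S \ S', (z i - x i) ^ 2
      ≤ 2 * ∑ i ∈ S \ S', u i ^ 2 + 2 * ∑ i ∈ S \ S', (u i - x i) ^ 2 := by
    rw [Finset.mul_sum, Finset.mul_sum, ← Finset.sum_add_distrib]
    apply Finset.sum_le_sum
    intro i hi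
    rw [hz0 i (Finset.mem_sdiff.1 hi).2]
    nlinarith [sq_nonneg (2 * u i - x i)]
  have p1 : 0 ≤ ∑ i ∈ S \ S', (u i - x i) ^ 2 := Finset.sum_nonneg fun i _ => sq_nonneg _
  have p2 : 0 ≤ ∑ i ∈ S ∩ S', (u i - x i) ^ 2 := Finset.sum_nonneg fun i _ => sq_nonneg _
  rw [hzx, hU, h3, h4]
  simp only [Pi.sub_apply]
  rw [hU]
  linarith

/-! ### Restricted isometry -/

lemma dot_transpose_mulVec {m n : ℕ} (A : Matrix (Fin m) (Fin n) ℝ) (x : Fin n → ℝ)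
    (y : Fin m → ℝ) : x ⬝ᵥ (Aᵀ *ᵥ y) = (A *ᵥ x) ⬝ᵥ y := by
  rw [Matrix.dotProduct_mulVec, Matrix.vecMul_transpose]

/-- `I - Aᵀ A` has norm at most `δ` between vectors supported in a common set of at most `q`
indices. -/
lemma ric_bound {m n : ℕ} (A : Matrix (Fin m) (Fin n) ℝ) (q : ℕ) (δ : ℝ) (hδ : IsRIC A q δ)
    (T R : Finset (Fin n)) (hTR : T ⊆ R) (hR : R.card ≤ q) (h : Fin n → ℝ)
    (hh : ∀ i ∉ R, h i = 0) :
    norm2 (restr T (h - Aᵀ *ᵥ (A *ᵥ h))) ≤ δ * norm2 h := by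
  obtain ⟨hd0, hd1, hric⟩ := hδ
  set w := restr T (h - Aᵀ *ᵥ (A *ᵥ h)) with hw
  have hw0 : ∀ i ∉ R, w i = 0 := fun i hi => by
    have : i ∉ T := fun h' => hi (hTR h')
    simp [hw, restr, this]
  have key : w ⬝ᵥ w = w ⬝ᵥ h - (A *ᵥ w) ⬝ᵥ (A *ᵥ h) := by
    rw [← dot_transpose_mulVec, ← dotProduct_sub]
    unfold dotProduct
    apply Finset.sum_congr rfl
    intro i _
    by_cases hi : i ∈ T <;> simp [hw, restr, hi]
  have hsupp (v : Fin n → ℝ) (hv : ∀ i ∉ R, v i = 0) : (supp v).ncard ≤ q := by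
    refine le_trans ?_ hR
    rw [← Set.ncard_coe_finset]
    apply Set.ncard_le_ncard _ R.finite_toSet
    intro i hi
    by_contra hc
    exact hi (hv i hc)
  -- Polarization at `w ± δ h`; the scaling `δ` is the one that optimizes the resulting bound.
  have h1 := (hric (w + δ • h) (hsupp _ fun i hi => by simp [hw0 i hi, hh i hi])).1
  have h2 := (hric (w - δ • h) (hsupp _ fun i hi => by simp [hw0 i hi, hh i hi])).2
  simp only [norm2_sq, mulVec_add, mulVec_sub, mulVec_smul, add_dotProduct, dotProduct_add,
    sub_dotProduct, dotProduct_sub, smul_dotProduct, dotProduct_smul, smul_eq_mul] at h1 h2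
  rw [dotProduct_comm h w, dotProduct_comm (A *ᵥ h) (A *ᵥ w)] at h1 h2
  apply norm2_le_of_sq _ (mul_nonneg hd0.le (norm2_nonneg _))
  rw [mul_pow, norm2_sq, norm2_sq]
  have h3 : δ * (w ⬝ᵥ w) ≤ δ * (δ ^ 2 * (h ⬝ᵥ h)) := by nlinarith
  exact le_of_mul_le_mul_left h3 hd0

/-! ### The regularized inverse -/

lemma reg_mulVec {m n : ℕ} (A : Matrix (Fin m) (Fin n) ℝ) (ε : ℝ) (v : Fin n → ℝ) :
    (Aᵀ * A + ε • (1 : Matrix (Fin n) (Fin n) ℝ)) *ᵥ v = Aᵀ *ᵥ (A *ᵥ v) + ε • v := by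
  rw [add_mulVec, smul_mulVec, one_mulVec, mulVec_mulVec]

lemma reg_isUnit {m n : ℕ} (A : Matrix (Fin m) (Fin n) ℝ) (ε : ℝ) (hε : 0 < ε) :
    IsUnit (Aᵀ * A + ε • (1 : Matrix (Fin n) (Fin n) ℝ)) := by
  rw [← Matrix.mulVec_injective_iff_isUnit]
  rw [← Matrix.coe_mulVecLin, ← LinearMap.ker_eq_bot, LinearMap.ker_eq_bot']
  intro v hv
  rw [Matrix.mulVecLin_apply, reg_mulVec] at hv
  have h := congrArg (fun z => v ⬝ᵥ z) hv
  simp only [dotProduct_add, dot_transpose_mulVec, dotProduct_smul, smul_eq_mul,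
    dotProduct_zero, ← norm2_sq] at h
  have h0 : norm2 v ^ 2 = 0 := by
    have := sq_nonneg (norm2 (A *ᵥ v))
    have := sq_nonneg (norm2 v)
    nlinarith
  rw [norm2_sq] at h0
  exact dotProduct_self_eq_zero.1 h0

lemma reg_mulVec_inv {m n : ℕ} (A : Matrix (Fin m) (Fin n) ℝ) (ε : ℝ) (hε : 0 < ε)
    (z : Fin n → ℝ) :
    Aᵀ *ᵥ (A *ᵥ ((Aᵀ * A + ε • (1 : Matrix (Fin n) (Fin n) ℝ))⁻¹ *ᵥ z))
      + ε • ((Aᵀ * A + ε • (1 : Matrix (Fin n) (Fin n) ℝ))⁻¹ *ᵥ z) = z := by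
  rw [← reg_mulVec, mulVec_mulVec,
    Matrix.mul_nonsing_inv _ ((Matrix.isUnit_iff_isUnit_det _).1 (reg_isUnit A ε hε)), one_mulVec]

/-- The bound `‖M⁻¹ Aᵀ e‖ ≤ σ / (ε + σ²) ‖e‖`. By duality it suffices to bound `A M⁻¹`, that is
`(ε + σ²) ‖A r‖ ≤ σ ‖M r‖`, which follows from the factorization
`σ² (ε + t)² - (ε + σ²)² t = (σ² - t) (ε² - σ² t)` evaluated at `t = Aᵀ A`. -/
lemma noise_bound {m n : ℕ} (A : Matrix (Fin m) (Fin n) ℝ) (σ ε : ℝ)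
    (hσ : 0 ≤ σ) (hA : ∀ v : Fin n → ℝ, norm2 (A *ᵥ v) ≤ σ * norm2 v) (hε : σ ^ 2 < ε)
    (e : Fin m → ℝ) :
    norm2 ((Aᵀ * A + ε • (1 : Matrix (Fin n) (Fin n) ℝ))⁻¹ *ᵥ (Aᵀ *ᵥ e))
      ≤ σ / (ε + σ ^ 2) * norm2 e := by
  have hε0 : 0 < ε := lt_of_le_of_lt (sq_nonneg σ) hε
  have hv := reg_mulVec_inv A ε hε0 (Aᵀ *ᵥ e)
  set v := (Aᵀ * A + ε • (1 : Matrix (Fin n) (Fin n) ℝ))⁻¹ *ᵥ (Aᵀ *ᵥ e)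
  have hr := reg_mulVec_inv A ε hε0 v
  set r := (Aᵀ * A + ε • (1 : Matrix (Fin n) (Fin n) ℝ))⁻¹ *ᵥ v
  have h1 : norm2 v ^ 2 = (A *ᵥ r) ⬝ᵥ e := by
    rw [← dot_transpose_mulVec, ← hv, norm2_sq]
    nth_rewrite 2 [← hr]
    simp only [dotProduct_add, dotProduct_smul, dot_transpose_mulVec]
    rw [dotProduct_comm (A *ᵥ v), dotProduct_comm v r]
  have hs : 0 < ε + σ ^ 2 := by positivity
  have h2 : (ε + σ ^ 2) * norm2 (A *ᵥ r) ≤ σ * norm2 v := by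
    rw [← sq_le_sq₀ (mul_nonneg hs.le (norm2_nonneg _)) (mul_nonneg hσ (norm2_nonneg _)),
      mul_pow, mul_pow]
    have hAr : norm2 (A *ᵥ r) ^ 2 ≤ σ ^ 2 * norm2 r ^ 2 := by
      rw [← mul_pow]
      exact pow_le_pow_left₀ (norm2_nonneg _) (hA r) 2
    have hq : 0 ≤ norm2 (σ ^ 2 • r - Aᵀ *ᵥ (A *ᵥ r)) ^ 2 := sq_nonneg _
    have hrr : r ⬝ᵥ (Aᵀ *ᵥ (A *ᵥ r)) = (A *ᵥ r) ⬝ᵥ (A *ᵥ r) := dot_transpose_mulVec _ _ _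
    rw [norm2_sq v, ← hr]
    simp only [norm2_sq, add_dotProduct, dotProduct_add,
      sub_dotProduct, dotProduct_sub, smul_dotProduct, dotProduct_smul, smul_eq_mul] at hq hAr ⊢
    rw [dotProduct_comm (Aᵀ *ᵥ (A *ᵥ r)) r, hrr] at hq ⊢
    have h4 : 0 ≤ (ε ^ 2 - (σ ^ 2) ^ 2) *
        (σ ^ 2 * (r ⬝ᵥ r) - (A *ᵥ r) ⬝ᵥ (A *ᵥ r)) := by
      apply mul_nonneg _ (by linarith)
      nlinarith [sq_nonneg σ]
    have h5 := mul_nonneg (sq_nonneg σ) hq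
    linear_combination h4 + h5
  have h3 := dot_le_norm2 (A *ᵥ r) e
  rw [div_mul_eq_mul_div, le_div_iff₀ hs]
  rcases (norm2_nonneg v).eq_or_lt with h0 | h0
  · rw [← h0]
    have := mul_nonneg hσ (norm2_nonneg e)
    linarith
  · refine le_of_mul_le_mul_left ?_ h0
    have h6 := mul_le_mul_of_nonneg_right h2 (norm2_nonneg e)
    have h7 := mul_le_mul_of_nonneg_left h3 hs.le
    rw [← h1] at h7
    linarith

/-! ### Spectral calculus for `Aᵀ A` -/

/-- The spectral function `t ↦ t - λ t / (ε + t)` is nonnegative on the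
possible eigenvalues `t` of `Aᵀ A` and largest at `t = s = σ₁²`; here `a = σ_m²`. -/
lemma scalar_bound (s a ε lam t : ℝ) (ha : 0 ≤ a) (hε : 0 < ε)
    (hlam : lam ≤ ε + a) (ht : t = 0 ∨ a ≤ t) (hts : t ≤ s) (has : a ≤ s) :
    0 ≤ t - lam * t / (ε + t) ∧ t - lam * t / (ε + t) ≤ s - lam * s / (ε + s) := by
  have hs : 0 < ε + s := by linarith
  have ht0 : 0 ≤ t := by rcases ht with h | h <;> linarith
  have htp : 0 < ε + t := by linarith
  have e1 (r : ℝ) (hr : 0 < ε + r) : r - lam * r / (ε + r) = r * (ε + r - lam) / (ε + r) := by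
    field_simp
  rw [e1 t htp, e1 s hs]
  rcases ht with h | h
  · subst h
    simp only [zero_mul, zero_div, le_refl, true_and]
    exact div_nonneg (mul_nonneg (by linarith) (by linarith)) hs.le
  · refine ⟨div_nonneg (mul_nonneg ht0 (by linarith)) htp.le, ?_⟩
    rw [div_le_div_iff₀ htp hs]
    have h1 : lam * ε ≤ (ε + a) * ε := mul_le_mul_of_nonneg_right hlam hε.le
    have h2 : (ε + a) * ε ≤ (ε + t) * (ε + s) := by
      apply mul_le_mul <;> linarith
    have h3 : 0 ≤ (s - t) * ((ε + t) * (ε + s) - lam * ε) :=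
      mul_nonneg (by linarith) (by linarith)
    linear_combination h3

/-- The bound `‖G h - λ M⁻¹ G h‖ ≤ (σ₁² - λ σ₁² / (ε + σ₁²)) ‖h‖`, read off coordinatewise in an
orthonormal eigenbasis of `G = Aᵀ A`. -/
lemma spectral_bound {m n : ℕ} (A : Matrix (Fin m) (Fin n) ℝ) (σ1 σm ε lam : ℝ)
    (hσ1 : IsMaxSingularValue A σ1) (hσm : IsMinSingularValue A σm) (hε : 0 < ε)
    (hlam : lam ≤ ε + σm ^ 2) (hms : σm ^ 2 ≤ σ1 ^ 2) (h : Fin n → ℝ) :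
    norm2 (Aᵀ *ᵥ (A *ᵥ h) - lam •
      ((Aᵀ * A + ε • (1 : Matrix (Fin n) (Fin n) ℝ))⁻¹ *ᵥ (Aᵀ *ᵥ (A *ᵥ h))))
      ≤ (σ1 ^ 2 - lam * σ1 ^ 2 / (ε + σ1 ^ 2)) * norm2 h := by
  have hv := reg_mulVec_inv A ε hε (Aᵀ *ᵥ (A *ᵥ h))
  set v := (Aᵀ * A + ε • (1 : Matrix (Fin n) (Fin n) ℝ))⁻¹ *ᵥ (Aᵀ *ᵥ (A *ᵥ h))
  have hG : (Aᵀ * A).IsHermitian := by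
    have := Matrix.isHermitian_conjTranspose_mul_self A
    rwa [Matrix.conjTranspose_eq_transpose_of_trivial] at this
  set b := hG.eigenvectorBasis
  set μ := hG.eigenvalues
  have hb (i : Fin n) : Aᵀ *ᵥ (A *ᵥ (b i).ofLp) = μ i • (b i).ofLp := by
    rw [mulVec_mulVec]
    exact hG.mulVec_eigenvectorBasis i
  have hb1 (i : Fin n) : norm2 (b i).ofLp = 1 := by
    rw [norm2_eq_norm]
    exact b.orthonormal.1 i
  have hAb (i : Fin n) : norm2 (A *ᵥ (b i).ofLp) ^ 2 = μ i := by
    rw [norm2_sq, ← dot_transpose_mulVec, hb, dotProduct_smul, ← norm2_sq, hb1]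
    simp
  have hμ0 (i : Fin n) : 0 ≤ μ i := by
    rw [← hAb i]
    exact sq_nonneg _
  have hμ1 (i : Fin n) : μ i ≤ σ1 ^ 2 := by
    rw [← hAb i]
    have := hσ1.2.1 (b i).ofLp
    rw [hb1, mul_one] at this
    exact pow_le_pow_left₀ (norm2_nonneg _) this 2
  have hμm (i : Fin n) : μ i = 0 ∨ σm ^ 2 ≤ μ i := by
    rcases (hμ0 i).eq_or_lt with h0 | h0
    · exact Or.inl h0.symm
    · right
      have h1 := hσm.2.1 (A *ᵥ (b i).ofLp)
      rw [hb, norm2_smul _ h0.le, hb1, mul_one] at h1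
      have h2 := pow_le_pow_left₀ (mul_nonneg hσm.1 (norm2_nonneg _)) h1 2
      rw [mul_pow, hAb, sq (μ i)] at h2
      exact le_of_mul_le_mul_right h2 h0
  have parseval (z : Fin n → ℝ) : norm2 z ^ 2 = ∑ i, ((b i).ofLp ⬝ᵥ z) ^ 2 := by
    have := b.sum_sq_norm_inner_right (WithLp.toLp 2 z)
    rw [norm2_eq_norm, ← this]
    apply Finset.sum_congr rfl
    intro i _
    rw [Real.norm_eq_abs, sq_abs, EuclideanSpace.inner_eq_star_dotProduct]
    simp [dotProduct_comm]
  have hGc (i : Fin n) (z : Fin n → ℝ) :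
      (b i).ofLp ⬝ᵥ (Aᵀ *ᵥ (A *ᵥ z)) = μ i * ((b i).ofLp ⬝ᵥ z) := by
    rw [dot_transpose_mulVec, dotProduct_comm, ← dot_transpose_mulVec, hb, dotProduct_smul,
      dotProduct_comm, smul_eq_mul]
  have hsc (i : Fin n) := scalar_bound (σ1 ^ 2) (σm ^ 2) ε lam (μ i) (sq_nonneg _) hε hlam
    (hμm i) (hμ1 i) hms
  have hc0 : 0 ≤ σ1 ^ 2 - lam * σ1 ^ 2 / (ε + σ1 ^ 2) :=
    (scalar_bound (σ1 ^ 2) (σm ^ 2) ε lam (σ1 ^ 2) (sq_nonneg _) hε hlam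
      (Or.inr hms) le_rfl hms).1
  apply norm2_le_of_sq _ (mul_nonneg hc0 (norm2_nonneg _))
  rw [mul_pow, parseval, parseval h, Finset.mul_sum]
  apply Finset.sum_le_sum
  intro i _
  have hvi : (b i).ofLp ⬝ᵥ v = μ i * ((b i).ofLp ⬝ᵥ h) / (ε + μ i) := by
    have h1 := congrArg (fun z => (b i).ofLp ⬝ᵥ z) hv
    simp only [dotProduct_add, dotProduct_smul, smul_eq_mul, hGc] at h1
    rw [eq_div_iff (by linarith [hμ0 i])]
    linarith
  have hcoord : (b i).ofLp ⬝ᵥ (Aᵀ *ᵥ (A *ᵥ h) - lam • v)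
      = (μ i - lam * μ i / (ε + μ i)) * ((b i).ofLp ⬝ᵥ h) := by
    rw [dotProduct_sub, dotProduct_smul, hGc, hvi, smul_eq_mul]
    ring
  rw [hcoord, mul_pow]
  exact mul_le_mul_of_nonneg_right (pow_le_pow_left₀ (hsc i).1 (hsc i).2 2) (sq_nonneg _)

/-- `σ_m ≤ σ₁`: for the minimizing `u`, `‖Aᵀ u‖² = ⟨u, A Aᵀ u⟩ ≤ ‖u‖ σ₁ ‖Aᵀ u‖`. -/
lemma sigma_min_le_max {m n : ℕ} (A : Matrix (Fin m) (Fin n) ℝ) (σ1 σm : ℝ)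
    (hσ1 : IsMaxSingularValue A σ1) (hσm : IsMinSingularValue A σm) : σm ≤ σ1 := by
  obtain ⟨h0, -, u, hu, hue⟩ := hσm
  have hup : 0 < norm2 u := by
    rcases (norm2_nonneg u).eq_or_lt with h | h
    · exfalso
      apply hu
      have h' := norm2_sq u
      rw [← h] at h'
      exact dotProduct_self_eq_zero.1 (by linarith)
    · exact h
  have h1 : norm2 (Aᵀ *ᵥ u) ^ 2 ≤ σ1 * norm2 (Aᵀ *ᵥ u) * norm2 u := by
    rw [norm2_sq, dot_transpose_mulVec]
    exact (dot_le_norm2 _ _).trans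
      (mul_le_mul_of_nonneg_right (hσ1.2.1 _) hup.le)
  rw [hue] at h1
  rcases h0.eq_or_lt with h | h
  · rw [← h]
    exact hσ1.1
  · have hp : 0 < σm * norm2 u ^ 2 := by positivity
    refine le_of_mul_le_mul_right ?_ hp
    linarith

/-! ### One iteration -/

/-- one NSIHT iteration in noisy settings. -/
theorem stmt_13 {m n : ℕ} (hmn : m ≤ n) (A : Matrix (Fin m) (Fin n) ℝ) (hA : A ≠ 0)
    (σ1 σm : ℝ) (hσ1 : IsMaxSingularValue A σ1) (hσm : IsMinSingularValue A σm)
    (k : ℕ) (hk : 0 < k) (hkn : 3 * k ≤ n)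
    (δ : ℝ) (hδ : IsRIC A (3 * k) δ)
    (ε lam : ℝ) (hε : σ1 ^ 2 < ε) (hlam0 : 0 ≤ lam) (hlam : lam ≤ ε + σm ^ 2)
    (x : Fin n → ℝ) (e : Fin m → ℝ) (y : Fin m → ℝ) (hy : y = A.mulVec x + e)
    (xS : Fin n → ℝ) (hxS : ∃ S : Set (Fin n), IsHardThresholding k x xS S)
    (e' : Fin m → ℝ) (he' : e' = A.mulVec (x - xS) + e)
    (xp xp1 : Fin n → ℝ) (hxp : (supp xp).ncard ≤ k)
    (hiter : ∃ S : Set (Fin n),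
      IsHardThresholding k
        (xp + lam • ((Aᵀ * A + ε • (1 : Matrix (Fin n) (Fin n) ℝ))⁻¹).mulVec
          (Aᵀ.mulVec (y - A.mulVec xp)))
        xp1 S) :
    norm2 (xp1 - xS) ≤
      Real.sqrt 3 * ((δ + σ1 ^ 2 - lam * σ1 ^ 2 / (ε + σ1 ^ 2)) * norm2 (xp - xS) +
        lam * σ1 / (ε + σ1 ^ 2) * norm2 e') := by
  classical
  have hε0 : 0 < ε := lt_of_le_of_lt (sq_nonneg σ1) hε
  obtain ⟨S, hScard, -, hS0, -⟩ := hxS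
  obtain ⟨S', hS'card, hS'z, hS'0, hS'le⟩ := hiter
  set M := Aᵀ * A + ε • (1 : Matrix (Fin n) (Fin n) ℝ) with hM
  set u := xp + lam • (M⁻¹).mulVec (Aᵀ.mulVec (y - A.mulVec xp)) with hu
  set h := xp - xS with hh
  have hcS : S.toFinset.card = k := by rw [← Set.ncard_eq_toFinset_card', hScard]
  have hcS' : S'.toFinset.card = k := by rw [← Set.ncard_eq_toFinset_card', hS'card]
  have hcP : (supp xp).toFinset.card ≤ k := by rw [← Set.ncard_eq_toFinset_card']; exact hxp
  have ht := threshold_bound S.toFinset S'.toFinset (hcS.trans hcS'.symm) xS u xp1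
    (by simpa using hS0) (by simpa using hS'z) (by simpa using hS'0) (by simpa using hS'le)
  have hr := ric_bound A (3 * k) δ hδ (S.toFinset ∪ S'.toFinset)
    (S.toFinset ∪ S'.toFinset ∪ (supp xp).toFinset) Finset.subset_union_left
    (by
      have h1 := Finset.card_union_le (S.toFinset ∪ S'.toFinset) (supp xp).toFinset
      have h2 := Finset.card_union_le S.toFinset S'.toFinset
      omega) h
    (by
      intro i hi
      simp only [Finset.mem_union, Set.mem_toFinset, not_or] at hi
      have hi2 : xp i = 0 := not_not.1 hi.2
      simp [hh, hi2, hS0 i hi.1.1])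
  have hms : σm ^ 2 ≤ σ1 ^ 2 := pow_le_pow_left₀ hσm.1 (sigma_min_le_max A σ1 σm hσ1 hσm) 2
  have hsp := spectral_bound A σ1 σm ε lam hσ1 hσm hε0 hlam hms h
  have hno := noise_bound A σ1 ε hσ1.1 hσ1.2.1 hε e'
  rw [← hM] at hsp hno
  have hres : y - A *ᵥ xp = e' - A *ᵥ h := by
    rw [hy, he', hh, mulVec_sub, mulVec_sub]
    abel
  have hdec : u - xS = (h - Aᵀ *ᵥ (A *ᵥ h)) +
      ((Aᵀ *ᵥ (A *ᵥ h) - lam • (M⁻¹ *ᵥ (Aᵀ *ᵥ (A *ᵥ h)))) + lam • (M⁻¹ *ᵥ (Aᵀ *ᵥ e'))) := by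
    rw [hu, hres, mulVec_sub, mulVec_sub, smul_sub, hh]
    abel
  refine ht.trans (mul_le_mul_of_nonneg_left ?_ (Real.sqrt_nonneg _))
  rw [hdec, restr_add]
  have h1 := norm2_add_le (restr (S.toFinset ∪ S'.toFinset) (h - Aᵀ *ᵥ (A *ᵥ h)))
    (restr (S.toFinset ∪ S'.toFinset)
      ((Aᵀ *ᵥ (A *ᵥ h) - lam • (M⁻¹ *ᵥ (Aᵀ *ᵥ (A *ᵥ h)))) + lam • (M⁻¹ *ᵥ (Aᵀ *ᵥ e'))))
  have h2 := norm2_restr_le (S.toFinset ∪ S'.toFinset)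
      ((Aᵀ *ᵥ (A *ᵥ h) - lam • (M⁻¹ *ᵥ (Aᵀ *ᵥ (A *ᵥ h)))) + lam • (M⁻¹ *ᵥ (Aᵀ *ᵥ e')))
  have h3 := norm2_add_le (Aᵀ *ᵥ (A *ᵥ h) - lam • (M⁻¹ *ᵥ (Aᵀ *ᵥ (A *ᵥ h))))
    (lam • (M⁻¹ *ᵥ (Aᵀ *ᵥ e')))
  rw [norm2_smul lam hlam0] at h3
  have h4 := mul_le_mul_of_nonneg_left hno hlam0
  have h5 : lam * (σ1 / (ε + σ1 ^ 2) * norm2 e') = lam * σ1 / (ε + σ1 ^ 2) * norm2 e' := by ring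
  rw [h5] at h4
  linarith
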